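/- Let N ≥ 1 be an integer, ω > 0, and 1 < p < p_max, and let u be a ground-state profile of (QLS). If ζ : ℝ^N → ℝ is smooth, with ∫_{ℝ^N}(ζ² + |∇ζ|²) dx < ∞, and satisfies L₋ζ = 0 pointwise on ℝ^N, then there exists a real number c such that ζ = c·u; that is, the kernel of L₋ is spanned by u. -/

import Mathlib

open MeasureTheory Real Filter Topology

noncomputable section

/-- Partial derivative along the `i`-th coordinate direction. -/
def pd {N : ℕ} {F : Type*} [NormedAddCommGroup F] [NormedSpace ℝ F]
    (i : Fin N) (f : EuclideanSpace ℝ (Fin N) → F) (x : EuclideanSpace ℝ (Fin N)) : F :=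
  fderiv ℝ f x (EuclideanSpace.single i 1)

/-- Euclidean Laplacian. -/
def lap {N : ℕ} {F : Type*} [NormedAddCommGroup F] [NormedSpace ℝ F]
    (f : EuclideanSpace ℝ (Fin N) → F) (x : EuclideanSpace ℝ (Fin N)) : F :=
  ∑ i : Fin N, pd i (pd i f) x

/-- Squared norm of the gradient of a real-valued function: `|∇f|²`. -/
def gradsq {N : ℕ} (f : EuclideanSpace ℝ (Fin N) → ℝ) (x : EuclideanSpace ℝ (Fin N)) : ℝ :=
  ∑ i : Fin N, (pd i f x) ^ 2

/-- A ground-state profile of the quasilinear Schrödinger equation (QLS)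
`-Δu - uΔ(u²) + ωu - u^p = 0` on `ℝ^N`: smooth, positive, radially symmetric with a
strictly decreasing positive profile, solves (QLS) pointwise, and decays
exponentially together with all its derivatives. -/
structure IsGroundState (N : ℕ) (ω p : ℝ) (u : EuclideanSpace ℝ (Fin N) → ℝ) : Prop where
  smooth : ContDiff ℝ (⊤ : ℕ∞) u
  pos : ∀ x, 0 < u x
  radial : ∃ U : ℝ → ℝ, StrictAntiOn U (Set.Ici 0) ∧ (∀ r, 0 ≤ r → 0 < U r) ∧
      ∀ x, u x = U ‖x‖
  solves : ∀ x, -lap u x - u x * lap (fun y => (u y) ^ 2) x + ω * u x - (u x) ^ p = 0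
  decay : ∀ k : ℕ, ∃ C > 0, ∃ δ > 0, ∀ x,
      ‖iteratedFDeriv ℝ k u x‖ ≤ C * Real.exp (-δ * ‖x‖)

/-- The linearized operator `L₊` around `u` (real-valued functions). -/
def Lplus {N : ℕ} (ω p : ℝ) (u η : EuclideanSpace ℝ (Fin N) → ℝ)
    (x : EuclideanSpace ℝ (Fin N)) : ℝ :=
  -lap η x - 2 * u x * lap (fun y => u y * η y) x + ω * η x
    - (lap (fun y => (u y) ^ 2) x + p * u x ^ (p - 1)) * η x

/-- The linearized operator `L₋` around `u`. -/
def Lminus {N : ℕ} (ω p : ℝ) (u ζ : EuclideanSpace ℝ (Fin N) → ℝ)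
    (x : EuclideanSpace ℝ (Fin N)) : ℝ :=
  -lap ζ x + ω * ζ x - (lap (fun y => (u y) ^ 2) x + u x ^ (p - 1)) * ζ x

/-!
For positive `u` the nonlinear equation says precisely that `L₋ u = 0`, and `L₋` is a Schrödinger
operator `-Δ + V`. If `ζ` is another element of the kernel, then the quotient `w = ζ / u` satisfies
`div (u² ∇w) = u Δζ - ζ Δu = 0`. Testing this equation against `χ² w` gives the Caccioppoli
inequality `∫ χ² u² |∇w|² ≤ 4 ∫ |∇χ|² u² w²`. Since `u² w² = ζ²` is integrable, cutoffs `χ` equal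
to `1` on the ball of radius `R` with `|∇χ|² ≤ C / R²` make the right-hand side tend to `0` as
`R → ∞`. Hence `∇w = 0` and `w` is constant.
-/

section

variable {N : ℕ} {f g h ρ w χ u ζ : EuclideanSpace ℝ (Fin N) → ℝ} {x : EuclideanSpace ℝ (Fin N)}
  {i : Fin N}

theorem pd_mul (hf : DifferentiableAt ℝ f x) (hg : DifferentiableAt ℝ g x) :
    pd i (f * g) x = f x * pd i g x + g x * pd i f x := by
  simp [pd, fderiv_mul hf hg]

theorem pd_sub (hf : DifferentiableAt ℝ f x) (hg : DifferentiableAt ℝ g x) :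
    pd i (f - g) x = pd i f x - pd i g x := by
  simp [pd, fderiv_sub hf hg]

theorem pd_comp_smul (c : ℝ) : pd i (fun y => f (c • y)) x = c * pd i f (c • x) := by
  simp [pd, fderiv_comp_smul]

theorem contDiff_pd {m n : WithTop ℕ∞} (hf : ContDiff ℝ n f) (hmn : m + 1 ≤ n) :
    ContDiff ℝ m (pd i f) :=
  (hf.fderiv_right hmn).clm_apply contDiff_const

theorem continuous_pd (hf : ContDiff ℝ 1 f) : Continuous (pd i f) :=
  (contDiff_pd (m := 0) hf (by norm_num)).continuous

theorem hasCompactSupport_pd (hf : HasCompactSupport f) : HasCompactSupport (pd i f) :=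
  hf.fderiv_apply ℝ _

theorem integral_mul_pd (hf : ContDiff ℝ 1 f) (hg : ContDiff ℝ 1 g) (hc : HasCompactSupport f) :
    ∫ x, f x * pd i g x = -∫ x, pd i f x * g x :=
  integral_mul_fderiv_eq_neg_fderiv_mul_of_integrable
    (((continuous_pd hf).mul hg.continuous).integrable_of_hasCompactSupport
      (hasCompactSupport_pd hc).mul_right)
    ((hf.continuous.mul (continuous_pd hg)).integrable_of_hasCompactSupport hc.mul_right)
    ((hf.continuous.mul hg.continuous).integrable_of_hasCompactSupport hc.mul_right)
    (fun x _ => hf.differentiable one_ne_zero x) (fun x _ => hg.differentiable one_ne_zero x)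

/-- The inner product `∇f · ∇g` of two gradients, the polarization of `gradsq`. -/
def gradInner (f g : EuclideanSpace ℝ (Fin N) → ℝ) (x : EuclideanSpace ℝ (Fin N)) : ℝ :=
  ∑ i : Fin N, pd i f x * pd i g x

theorem gradInner_self : gradInner f f = gradsq f := by
  ext
  simp only [gradInner, gradsq, sq]

theorem gradInner_mul_left (hf : DifferentiableAt ℝ f x) (hg : DifferentiableAt ℝ g x) :
    gradInner (f * g) h x = f x * gradInner g h x + g x * gradInner f h x := by
  simp only [gradInner, pd_mul hf hg, Finset.mul_sum, ← Finset.sum_add_distrib]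
  exact Finset.sum_congr rfl fun i _ => by ring

theorem continuous_gradInner (hf : ContDiff ℝ 1 f) (hg : ContDiff ℝ 1 g) :
    Continuous (gradInner f g) :=
  continuous_finsetSum _ fun _ _ => (continuous_pd hf).mul (continuous_pd hg)

theorem hasCompactSupport_gradInner (hf : HasCompactSupport f) :
    HasCompactSupport (gradInner f g) := by
  refine .intro hf.isCompact fun x hx => Finset.sum_eq_zero fun i _ => ?_
  have hpd : pd i f x = 0 :=
    image_eq_zero_of_notMem_tsupport fun hx' => hx (tsupport_fderiv_apply_subset ℝ _ hx')
  rw [hpd, zero_mul]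

theorem gradsq_nonneg : 0 ≤ gradsq f x :=
  Finset.sum_nonneg fun _ _ => sq_nonneg _

theorem gradsq_comp_smul (c : ℝ) : gradsq (fun y => f (c • y)) x = c ^ 2 * gradsq f (c • x) := by
  simp only [gradsq, pd_comp_smul, mul_pow, Finset.mul_sum]

theorem continuous_gradsq (hf : ContDiff ℝ 1 f) : Continuous (gradsq f) :=
  gradInner_self ▸ continuous_gradInner hf hf

theorem hasCompactSupport_gradsq (hf : HasCompactSupport f) : HasCompactSupport (gradsq f) :=
  gradInner_self ▸ hasCompactSupport_gradInner hf

theorem fderiv_eq_zero_of_gradsq_eq_zero (hf : gradsq f x = 0) : fderiv ℝ f x = 0 := by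
  have hpd : ∀ i, pd i f x = 0 := fun i =>
    pow_eq_zero_iff two_ne_zero |>.1 <|
      (Finset.sum_eq_zero_iff_of_nonneg fun _ _ => sq_nonneg _).1 hf i (Finset.mem_univ i)
  refine ContinuousLinearMap.coe_injective ?_
  refine (EuclideanSpace.basisFun (Fin N) ℝ).toBasis.ext fun i => ?_
  simpa [pd] using hpd i

theorem integrable_sq_of_integrable_sq_add_gradsq (hf : Continuous f)
    (hint : Integrable fun x => f x ^ 2 + gradsq f x) : Integrable fun x => f x ^ 2 :=
  hint.mono' (hf.pow 2).aestronglyMeasurable <| .of_forall fun x =>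
    (Real.norm_of_nonneg (sq_nonneg (f x))).trans_le (le_add_of_nonneg_right gradsq_nonneg)

/-- The weighted Laplacian `div (ρ ∇w)`. -/
def weightedLap (ρ w : EuclideanSpace ℝ (Fin N) → ℝ) (x : EuclideanSpace ℝ (Fin N)) : ℝ :=
  ∑ i : Fin N, pd i (ρ * pd i w) x

-- Both sides are the divergence of `u² ∇w = u ∇(u w) - u w ∇u`.
theorem weightedLap_sq (hu : ContDiff ℝ 2 u) (hw : ContDiff ℝ 2 w) :
    weightedLap (u ^ 2) w x = u x * lap (u * w) x - u x * w x * lap u x := by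
  have hdiff {f : EuclideanSpace ℝ (Fin N) → ℝ} (hf : ContDiff ℝ 2 f) : Differentiable ℝ f :=
    hf.differentiable two_ne_zero
  have hdiff_pd {f : EuclideanSpace ℝ (Fin N) → ℝ} (hf : ContDiff ℝ 2 f) (i : Fin N) :
      Differentiable ℝ (pd i f) :=
    (contDiff_pd (m := 1) hf (by norm_num)).differentiable one_ne_zero
  have huw : ContDiff ℝ 2 (u * w) := hu.mul hw
  have hfield (i : Fin N) : u ^ 2 * pd i w = u * pd i (u * w) - u * w * pd i u := by
    ext y
    simp only [Pi.mul_apply, Pi.sub_apply, Pi.pow_apply, pd_mul (hdiff hu y) (hdiff hw y)]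
    ring
  simp only [weightedLap, lap, hfield, Finset.mul_sum, ← Finset.sum_sub_distrib]
  refine Finset.sum_congr rfl fun i _ => ?_
  rw [pd_sub ((hdiff hu x).mul (hdiff_pd huw i x)) ((hdiff huw x).mul (hdiff_pd hu i x)),
    pd_mul (hdiff hu x) (hdiff_pd huw i x), pd_mul (hdiff huw x) (hdiff_pd hu i x),
    Pi.mul_apply]
  ring

theorem integral_mul_weightedLap (hf : ContDiff ℝ 1 f) (hc : HasCompactSupport f)
    (hρ : ContDiff ℝ 1 ρ) (hw : ContDiff ℝ 2 w) :
    ∫ x, f x * weightedLap ρ w x = -∫ x, ρ x * gradInner f w x := by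
  have hpdw (i : Fin N) : ContDiff ℝ 1 (pd i w) := contDiff_pd hw (by norm_num)
  have hfield (i : Fin N) : ContDiff ℝ 1 (ρ * pd i w) := hρ.mul (hpdw i)
  calc ∫ x, f x * weightedLap ρ w x
      = ∑ i, ∫ x, f x * pd i (ρ * pd i w) x := by
        simp only [weightedLap, Finset.mul_sum]
        exact integral_finsetSum _ fun i _ => (hf.continuous.mul
          (continuous_pd (hfield i))).integrable_of_hasCompactSupport hc.mul_right
    _ = -∑ i, ∫ x, pd i f x * (ρ * pd i w) x := by
        simp only [integral_mul_pd hf (hfield _) hc, Finset.sum_neg_distrib]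
    _ = -∫ x, ∑ i, pd i f x * (ρ * pd i w) x := by
        refine congrArg Neg.neg (integral_finsetSum _ fun i _ => ?_).symm
        exact ((continuous_pd hf).mul (hfield i).continuous).integrable_of_hasCompactSupport
          (hasCompactSupport_pd hc).mul_right
    _ = -∫ x, ρ x * gradInner f w x := by
        simp only [gradInner, Finset.mul_sum, Pi.mul_apply, mul_left_comm]

-- The difference of the two sides is `|χ ∇w + 2 w ∇χ|²`.
theorem sq_mul_gradsq_le (hχ : DifferentiableAt ℝ χ x) (hw : DifferentiableAt ℝ w x) :
    χ x ^ 2 * gradsq w x ≤ 4 * (gradsq χ x * w x ^ 2) + 2 * gradInner (χ ^ 2 * w) w x := by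
  have hsq : 0 ≤ ∑ i, (χ x * pd i w x + 2 * w x * pd i χ x) ^ 2 :=
    Finset.sum_nonneg fun _ _ => sq_nonneg _
  have hexpand : ∑ i, (χ x * pd i w x + 2 * w x * pd i χ x) ^ 2 =
      χ x ^ 2 * gradsq w x + 4 * χ x * w x * gradInner χ w x + 4 * w x ^ 2 * gradsq χ x := by
    simp only [gradsq, gradInner, Finset.mul_sum, ← Finset.sum_add_distrib]
    exact Finset.sum_congr rfl fun i _ => by ring
  have htest : gradInner (χ ^ 2 * w) w x =
      χ x ^ 2 * gradsq w x + 2 * χ x * w x * gradInner χ w x := by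
    rw [sq χ, gradInner_mul_left (hχ.mul hχ) hw, gradInner_mul_left hχ hχ, gradInner_self,
      Pi.mul_apply]
    ring
  linarith

theorem integral_sq_mul_gradsq_le (hχ : ContDiff ℝ 1 χ) (hc : HasCompactSupport χ)
    (hρ : ContDiff ℝ 1 ρ) (hρ_nonneg : ∀ x, 0 ≤ ρ x) (hw : ContDiff ℝ 2 w)
    (hlap : ∀ x, weightedLap ρ w x = 0) :
    ∫ x, χ x ^ 2 * (ρ x * gradsq w x) ≤ 4 * ∫ x, gradsq χ x * (ρ x * w x ^ 2) := by
  have hw₁ : ContDiff ℝ 1 w := hw.of_le (by norm_num)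
  have hφ : ContDiff ℝ 1 (χ ^ 2 * w) := (hχ.pow 2).mul hw₁
  have hχ_sq : HasCompactSupport (χ ^ 2) := sq χ ▸ hc.mul_right
  have hφc : HasCompactSupport (χ ^ 2 * w) := hχ_sq.mul_right
  have htest : ∫ x, ρ x * gradInner (χ ^ 2 * w) w x = 0 := by
    have hgreen := integral_mul_weightedLap hφ hφc hρ hw
    simpa only [hlap, mul_zero, integral_zero, zero_eq_neg] using hgreen
  have hint_left : Integrable fun x => χ x ^ 2 * (ρ x * gradsq w x) :=
    ((hχ.continuous.pow 2).mul
      (hρ.continuous.mul (continuous_gradsq hw₁))).integrable_of_hasCompactSupport hχ_sq.mul_right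
  have hint_right : Integrable fun x => gradsq χ x * (ρ x * w x ^ 2) :=
    ((continuous_gradsq hχ).mul
      (hρ.continuous.mul (hw.continuous.pow 2))).integrable_of_hasCompactSupport
        (hasCompactSupport_gradsq hc).mul_right
  have hint_test : Integrable fun x => ρ x * gradInner (χ ^ 2 * w) w x :=
    (hρ.continuous.mul (continuous_gradInner hφ hw₁)).integrable_of_hasCompactSupport
      (hasCompactSupport_gradInner hφc).mul_left
  calc ∫ x, χ x ^ 2 * (ρ x * gradsq w x)
      ≤ ∫ x, (4 * (gradsq χ x * (ρ x * w x ^ 2)) + 2 * (ρ x * gradInner (χ ^ 2 * w) w x)) := by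
        refine integral_mono hint_left ((hint_right.const_mul 4).add (hint_test.const_mul 2))
          fun x => ?_
        have hpointwise := mul_le_mul_of_nonneg_left (sq_mul_gradsq_le
          (hχ.differentiable one_ne_zero x) (hw.differentiable two_ne_zero x)) (hρ_nonneg x)
        dsimp only
        linarith
    _ = 4 * ∫ x, gradsq χ x * (ρ x * w x ^ 2) := by
        rw [integral_add (hint_right.const_mul 4) (hint_test.const_mul 2), integral_const_mul,
          integral_const_mul, htest, mul_zero, add_zero]

theorem exists_cutoff_gradsq_le (N : ℕ) : ∃ C : ℝ, ∀ R > 0,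
    ∃ χ : EuclideanSpace ℝ (Fin N) → ℝ, ContDiff ℝ (⊤ : ℕ∞) χ ∧ HasCompactSupport χ ∧
      (∀ x ∈ Metric.closedBall 0 R, χ x = 1) ∧ ∀ x, gradsq χ x ≤ C / R ^ 2 := by
  let b : ContDiffBump (0 : EuclideanSpace ℝ (Fin N)) := ⟨1, 2, one_pos, one_lt_two⟩
  obtain ⟨C, hC⟩ := (hasCompactSupport_gradsq b.hasCompactSupport).exists_bound_of_continuous
    (continuous_gradsq b.contDiff)
  refine ⟨C, fun R hR => ⟨fun x => b (R⁻¹ • x), b.contDiff.comp (contDiff_const_smul _),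
    b.hasCompactSupport.comp_homeomorph (Homeomorph.smulOfNeZero R⁻¹ (inv_ne_zero hR.ne')),
    fun x hx => b.one_of_mem_closedBall ?_, fun x => ?_⟩⟩
  · rw [mem_closedBall_zero_iff] at hx ⊢
    rw [norm_smul, norm_inv, Real.norm_of_nonneg hR.le]
    exact (inv_mul_le_one₀ hR).2 hx
  · rw [gradsq_comp_smul, inv_pow, div_eq_inv_mul]
    exact mul_le_mul_of_nonneg_left ((le_abs_self _).trans (hC _)) (by positivity)

theorem eq_zero_of_tendsto_setIntegral_closedBall {X : Type*} [MetricSpace X] [ProperSpace X]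
    [MeasurableSpace X] [OpensMeasurableSpace X] {μ : Measure X} [IsFiniteMeasureOnCompacts μ]
    [μ.IsOpenPosMeasure] {f : X → ℝ} (hf : Continuous f) (hf_nonneg : 0 ≤ f) (x₀ : X)
    (hlim : Tendsto (fun R => ∫ x in Metric.closedBall x₀ R, f x ∂μ) atTop (𝓝 0)) : f = 0 := by
  have hcover : AECover μ atTop fun R : ℝ => Metric.closedBall x₀ R := aecover_closedBall tendsto_id
  have hball : ∀ R, IntegrableOn f (Metric.closedBall x₀ R) μ := fun R =>
    hf.continuousOn.integrableOn_compact (isCompact_closedBall x₀ R)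
  have hint : Integrable f μ :=
    hcover.integrable_of_integral_tendsto_of_nonneg_ae 0 hball (.of_forall hf_nonneg) hlim
  have hzero : ∫ x, f x ∂μ = 0 := hcover.integral_eq_of_tendsto 0 hint hlim
  have hae : f =ᵐ[μ] 0 := (integral_eq_zero_iff_of_nonneg hf_nonneg hint).1 hzero
  exact (hf.ae_eq_iff_eq μ continuous_zero).1 hae

theorem exists_setIntegral_gradsq_le (hρ : ContDiff ℝ 1 ρ) (hρ_nonneg : ∀ x, 0 ≤ ρ x)
    (hw : ContDiff ℝ 2 w) (hlap : ∀ x, weightedLap ρ w x = 0)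
    (hint : Integrable fun x => ρ x * w x ^ 2) :
    ∃ K : ℝ, ∀ R > 0, ∫ x in Metric.closedBall 0 R, ρ x * gradsq w x ≤ K / R ^ 2 := by
  obtain ⟨C, hC⟩ := exists_cutoff_gradsq_le N
  refine ⟨4 * C * ∫ x, ρ x * w x ^ 2, fun R hR => ?_⟩
  obtain ⟨χ, hχ, hχc, hχ_one, hχ_grad⟩ := hC R hR
  have hχ₁ : ContDiff ℝ 1 χ := contDiff_infty.1 hχ 1
  have hχ_sq : HasCompactSupport (χ ^ 2) := sq χ ▸ hχc.mul_right
  have hcont : Continuous fun x => ρ x * gradsq w x :=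
    hρ.continuous.mul (continuous_gradsq (hw.of_le (by norm_num)))
  have hint_cutoff : Integrable fun x => χ x ^ 2 * (ρ x * gradsq w x) :=
    ((hχ.continuous.pow 2).mul hcont).integrable_of_hasCompactSupport hχ_sq.mul_right
  calc ∫ x in Metric.closedBall 0 R, ρ x * gradsq w x
      = ∫ x in Metric.closedBall 0 R, χ x ^ 2 * (ρ x * gradsq w x) :=
        setIntegral_congr_fun measurableSet_closedBall fun x hx => by
          simp only [hχ_one x hx, one_pow, one_mul]
    _ ≤ ∫ x, χ x ^ 2 * (ρ x * gradsq w x) :=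
        setIntegral_le_integral hint_cutoff <| .of_forall fun x =>
          mul_nonneg (sq_nonneg _) (mul_nonneg (hρ_nonneg x) gradsq_nonneg)
    _ ≤ 4 * ∫ x, gradsq χ x * (ρ x * w x ^ 2) :=
        integral_sq_mul_gradsq_le hχ₁ hχc hρ hρ_nonneg hw hlap
    _ ≤ 4 * ∫ x, C / R ^ 2 * (ρ x * w x ^ 2) := by
        have hmass (x : EuclideanSpace ℝ (Fin N)) : 0 ≤ ρ x * w x ^ 2 :=
          mul_nonneg (hρ_nonneg x) (sq_nonneg _)
        refine mul_le_mul_of_nonneg_left (integral_mono_of_nonneg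
          (.of_forall fun x => mul_nonneg gradsq_nonneg (hmass x)) (hint.const_mul _)
          (.of_forall fun x => mul_le_mul_of_nonneg_right (hχ_grad x) (hmass x))) zero_le_four
    _ = 4 * C * (∫ x, ρ x * w x ^ 2) / R ^ 2 := by
        rw [integral_const_mul]
        ring

theorem eq_of_weightedLap_eq_zero (hρ : ContDiff ℝ 1 ρ) (hρ_pos : ∀ x, 0 < ρ x)
    (hw : ContDiff ℝ 2 w) (hlap : ∀ x, weightedLap ρ w x = 0)
    (hint : Integrable fun x => ρ x * w x ^ 2) (x y : EuclideanSpace ℝ (Fin N)) : w x = w y := by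
  have henergy_nonneg (x : EuclideanSpace ℝ (Fin N)) : 0 ≤ ρ x * gradsq w x :=
    mul_nonneg (hρ_pos x).le gradsq_nonneg
  obtain ⟨K, hK⟩ := exists_setIntegral_gradsq_le hρ (fun x => (hρ_pos x).le) hw hlap hint
  have hlim : Tendsto (fun R => ∫ x in Metric.closedBall 0 R, ρ x * gradsq w x) atTop (𝓝 0) :=
    squeeze_zero' (.of_forall fun R => integral_nonneg henergy_nonneg)
      (eventually_atTop.2 ⟨1, fun R hR => hK R (one_pos.trans_le hR)⟩)
      (tendsto_const_nhds.div_atTop (tendsto_pow_atTop two_ne_zero))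
  have henergy : (fun x => ρ x * gradsq w x) = 0 :=
    eq_zero_of_tendsto_setIntegral_closedBall
      (hρ.continuous.mul (continuous_gradsq (hw.of_le (by norm_num)))) henergy_nonneg 0 hlim
  have hgrad (x : EuclideanSpace ℝ (Fin N)) : gradsq w x = 0 :=
    (mul_eq_zero.1 (congrFun henergy x)).resolve_left (hρ_pos x).ne'
  exact is_const_of_fderiv_eq_zero (hw.differentiable two_ne_zero)
    (fun x => fderiv_eq_zero_of_gradsq_eq_zero (hgrad x)) x y

theorem exists_eq_const_mul_of_lap_eq_mul {V : EuclideanSpace ℝ (Fin N) → ℝ}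
    (hu : ContDiff ℝ 2 u) (hu_pos : ∀ x, 0 < u x) (hu_lap : ∀ x, lap u x = V x * u x)
    (hζ : ContDiff ℝ 2 ζ) (hζ_lap : ∀ x, lap ζ x = V x * ζ x)
    (hζ_int : Integrable fun x => ζ x ^ 2) :
    ∃ c : ℝ, ∀ x, ζ x = c * u x := by
  have hw : ContDiff ℝ 2 (ζ / u) := hζ.div hu fun x => (hu_pos x).ne'
  have hζ_eq (x : EuclideanSpace ℝ (Fin N)) : u x * (ζ / u) x = ζ x :=
    mul_div_cancel₀ _ (hu_pos x).ne'
  have hlap (x : EuclideanSpace ℝ (Fin N)) : weightedLap (u ^ 2) (ζ / u) x = 0 := by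
    rw [weightedLap_sq hu hw, show u * (ζ / u) = ζ from funext hζ_eq, hζ_eq, hu_lap, hζ_lap]
    ring
  have hint : Integrable fun x => (u ^ 2) x * (ζ / u) x ^ 2 := by
    simpa only [Pi.pow_apply, ← mul_pow, hζ_eq] using hζ_int
  refine ⟨(ζ / u) 0, fun x => ?_⟩
  rw [← eq_of_weightedLap_eq_zero ((hu.of_le (by norm_num)).pow 2) (fun x => pow_pos (hu_pos x) 2)
    hw hlap hint x 0, mul_comm, hζ_eq]

theorem Lminus_self (ω p : ℝ) (hu_pos : 0 < u x) :
    Lminus ω p u u x = -lap u x - u x * lap (fun y => u y ^ 2) x + ω * u x - u x ^ p := by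
  have hpow : u x ^ p = u x ^ (p - 1) * u x := by
    rw [← rpow_add_one hu_pos.ne', sub_add_cancel]
  rw [Lminus, hpow]
  ring

theorem Lminus_eq_zero_iff {ω p : ℝ} : Lminus ω p u ζ x = 0 ↔
    lap ζ x = (ω - (lap (fun y => u y ^ 2) x + u x ^ (p - 1))) * ζ x := by
  rw [Lminus]
  constructor <;> intro heq <;> linarith

theorem stmt2_general {ω p : ℝ} (hu : ContDiff ℝ 2 u) (hu_pos : ∀ x, 0 < u x)
    (hu_solves : ∀ x, -lap u x - u x * lap (fun y => u y ^ 2) x + ω * u x - u x ^ p = 0)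
    (hζ : ContDiff ℝ 2 ζ) (hζ_int : Integrable fun x => ζ x ^ 2)
    (hζ_ker : ∀ x, Lminus ω p u ζ x = 0) :
    ∃ c : ℝ, ∀ x, ζ x = c * u x := by
  have hu_ker (x : EuclideanSpace ℝ (Fin N)) : Lminus ω p u u x = 0 :=
    (Lminus_self ω p (hu_pos x)).trans (hu_solves x)
  exact exists_eq_const_mul_of_lap_eq_mul hu hu_pos (fun x => Lminus_eq_zero_iff.1 (hu_ker x))
    hζ (fun x => Lminus_eq_zero_iff.1 (hζ_ker x)) hζ_int

end

/-- The kernel of `L₋` is spanned by `u`. -/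
theorem stmt2 (N : ℕ) (hN : 1 ≤ N) (ω p : ℝ) (hω : 0 < ω) (hp : 1 < p)
    (hpmax : 3 ≤ N → p < (3 * (N : ℝ) + 2) / ((N : ℝ) - 2))
    (u : EuclideanSpace ℝ (Fin N) → ℝ) (hu : IsGroundState N ω p u)
    (ζ : EuclideanSpace ℝ (Fin N) → ℝ) (hζ : ContDiff ℝ (⊤ : ℕ∞) ζ)
    (hint : Integrable (fun x => (ζ x) ^ 2 + gradsq ζ x))
    (heq : ∀ x, Lminus ω p u ζ x = 0) :
    ∃ c : ℝ, ∀ x, ζ x = c * u x := by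
  exact stmt2_general (contDiff_infty.1 hu.smooth 2) hu.pos hu.solves (contDiff_infty.1 hζ 2)
    (integrable_sq_of_integrable_sq_add_gradsq hζ.continuous hint) heq

end
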